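/- Let 0 < m ≤ 1. There exists a constant c = c(m) > 0 such that for all u, a, ψ ∈ ℝ with ψ ≤ u one has |u − a| (ψ^m − a^m)_+ ≤ (1/2) 𝔟[u^m, a^m] + c |ψ^((1+m)/2) − a^((1+m)/2)|², where 𝔟[u^m, a^m] := (m/(1+m))(|a|^(1+m) − |u|^(1+m)) − u (a^m − u^m). -/

import Mathlib

/-- Signed power: `a^k := |a|^(k-1) a`. -/
noncomputable def spow (a k : ℝ) : ℝ := |a| ^ (k - 1) * a

/-- The boundary term `𝔟[u^m, a^m]`. -/
noncomputable def bterm (m u a : ℝ) : ℝ :=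
  m / (1 + m) * (|a| ^ (1 + m) - |u| ^ (1 + m)) - u * (spow a m - spow u m)

/-!
The boundary term `bterm m u a` is the integral of `s^m - a^m` over `s` from `a` to `u`, a Bregman
divergence: it is nonnegative by Young's inequality and satisfies the three-point identity
`bterm m u a = bterm m u θ + bterm m θ a + (u - θ) (θ^m - a^m)`.

When `ψ^m ≤ a^m` the positive part vanishes. Otherwise `a ≤ ψ ≤ u`, and taking `θ` with
`θ^m - a^m = 2 (ψ^m - a^m)` in the identity gives
`(u - a) (ψ^m - a^m) ≤ (1/2) bterm m u a + (θ - a) (ψ^m - a^m)`,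
whose last term does not involve `u`. With `x = a^m`, `y = ψ^m`, `p = 1/m` and `q = (p + 1)/2` it
equals `((2y - x)^p - x^p) (y - x)`. Since `y^k - x^k` is comparable to
`max(|x|, |y|)^(k-1) (y - x)` for every `k > 0`, and replacing `y` by `2y - x` increases the maximum
at most by a factor `3`, it is bounded by a multiple of `(max(|x|, |y|)^(q-1) (y - x))²`, hence of
`(y^q - x^q)² = (ψ^((1+m)/2) - a^((1+m)/2))²`.
-/

lemma spow_one (a : ℝ) : spow a 1 = a := by simp [spow]

lemma neg_spow (a k : ℝ) : spow (-a) k = -spow a k := by simp [spow]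

lemma mul_spow (a b k : ℝ) : spow (a * b) k = spow a k * spow b k := by
  simp only [spow, abs_mul, Real.mul_rpow (abs_nonneg a) (abs_nonneg b)]
  ring

lemma abs_spow_of_ne_zero {a : ℝ} (ha : a ≠ 0) (k : ℝ) : |spow a k| = |a| ^ k := by
  have ha' : |a| ≠ 0 := abs_ne_zero.mpr ha
  rw [spow, abs_mul, abs_of_nonneg (by positivity : 0 ≤ |a| ^ (k - 1)), Real.rpow_sub_one ha',
    div_mul_cancel₀ _ ha']

lemma abs_spow (a : ℝ) {k : ℝ} (hk : k ≠ 0) : |spow a k| = |a| ^ k := by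
  rcases eq_or_ne a 0 with rfl | ha
  · simp [spow, Real.zero_rpow hk]
  · exact abs_spow_of_ne_zero ha k

lemma spow_eq_rpow_of_nonneg {a k : ℝ} (ha : 0 ≤ a) (hk : k ≠ 0) : spow a k = a ^ k := by
  have hs : 0 ≤ spow a k := mul_nonneg (by positivity) ha
  rw [← abs_of_nonneg hs, abs_spow a hk, abs_of_nonneg ha]

lemma spow_nonpos {a : ℝ} (ha : a ≤ 0) (k : ℝ) : spow a k ≤ 0 :=
  mul_nonpos_of_nonneg_of_nonpos (by positivity) ha

lemma spow_mul (a k l : ℝ) : spow a (k * l) = spow (spow a k) l := by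
  rcases eq_or_ne a 0 with rfl | ha
  · simp [spow]
  · have ha' : 0 < |a| := abs_pos.mpr ha
    calc spow a (k * l) = |a| ^ (k * (l - 1) + (k - 1)) * a := by rw [spow]; ring_nf
      _ = (|a| ^ k) ^ (l - 1) * (|a| ^ (k - 1) * a) := by
        rw [Real.rpow_add ha', Real.rpow_mul ha'.le, mul_assoc]
      _ = spow (spow a k) l := by rw [spow, abs_spow_of_ne_zero ha, spow]

lemma spow_spow_inv {k : ℝ} (hk : k ≠ 0) (a : ℝ) : spow (spow a k) k⁻¹ = a := by
  rw [← spow_mul, mul_inv_cancel₀ hk, spow_one]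

lemma spow_inv_spow {k : ℝ} (hk : k ≠ 0) (a : ℝ) : spow (spow a k⁻¹) k = a := by
  rw [← spow_mul, inv_mul_cancel₀ hk, spow_one]

lemma self_mul_spow (a : ℝ) {k : ℝ} (hk : 1 + k ≠ 0) : a * spow a k = |a| ^ (1 + k) := by
  rcases eq_or_ne a 0 with rfl | ha
  · simp [Real.zero_rpow hk]
  · have ha' : 0 < |a| := abs_pos.mpr ha
    calc a * spow a k = |a| ^ (k - 1) * (|a| * |a|) := by rw [spow, abs_mul_abs_self]; ring
      _ = |a| ^ (1 + k) := by
        rw [← mul_assoc, ← Real.rpow_add_one ha'.ne', ← Real.rpow_add_one ha'.ne']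
        ring_nf

lemma min_one_mul_one_sub_le_one_sub_spow {p t : ℝ} (hp : 0 < p) (ht : t ∈ Set.Icc (-1) 1) :
    min 1 p / 2 * (1 - t) ≤ 1 - spow t p := by
  obtain ⟨ht₁, ht₂⟩ := ht
  have hmin : 0 < min 1 p := lt_min one_pos hp
  have h1t : 0 ≤ 1 - t := sub_nonneg.mpr ht₂
  rcases le_total 0 t with ht | ht
  · have hsharp : min 1 p * (1 - t) ≤ 1 - t ^ p := by
      rcases le_total 1 p with h | h
      · rw [min_eq_left h, one_mul]
        exact sub_le_sub_left (Real.rpow_le_self_of_le_one ht ht₂ h) 1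
      · have hbernoulli := rpow_one_add_le_one_add_mul_self (s := t - 1) (by linarith) hp.le h
        rw [add_sub_cancel] at hbernoulli
        rw [min_eq_right h]
        linarith
    rw [spow_eq_rpow_of_nonneg ht hp.ne']
    linarith [mul_nonneg hmin.le h1t]
  · have hle : min 1 p * (1 - t) ≤ 1 * 2 :=
      mul_le_mul (min_le_left 1 p) (by linarith) h1t zero_le_one
    linarith [spow_nonpos ht p]

lemma spow_mem_Icc {p t : ℝ} (hp : 0 < p) (ht : t ∈ Set.Icc (-1) 1) :
    spow t p ∈ Set.Icc (-1) 1 := by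
  rw [Set.mem_Icc, ← abs_le] at ht ⊢
  rw [abs_spow t hp.ne']
  exact Real.rpow_le_one (abs_nonneg t) ht hp.le

-- This is the lower bound for the inverse function `s ↦ s ^ p⁻¹`, evaluated at `s = t ^ p`.
lemma one_sub_spow_le_max_one_mul_one_sub {p t : ℝ} (hp : 0 < p) (ht : t ∈ Set.Icc (-1) 1) :
    1 - spow t p ≤ 2 * max 1 p * (1 - t) := by
  have hinv := min_one_mul_one_sub_le_one_sub_spow (inv_pos.mpr hp) (spow_mem_Icc hp ht)
  have hmax : max 1 p * min 1 p⁻¹ = 1 := by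
    rcases le_total 1 p with h | h
    · rw [max_eq_right h, min_eq_right (inv_le_one_of_one_le₀ h), mul_inv_cancel₀ hp.ne']
    · rw [max_eq_left h, min_eq_left ((one_le_inv₀ hp).mpr h), mul_one]
  rw [spow_spow_inv hp.ne'] at hinv
  calc 1 - spow t p = 2 * max 1 p * (min 1 p⁻¹ / 2 * (1 - spow t p)) := by
        linear_combination (-(1 - spow t p)) * hmax
    _ ≤ 2 * max 1 p * (1 - t) := by gcongr

lemma exists_eq_mul_of_abs_le {x y : ℝ} (h : |x| ≤ y) : ∃ t ∈ Set.Icc (-1 : ℝ) 1, x = y * t := by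
  rcases ((abs_nonneg x).trans h).eq_or_lt with rfl | hy
  · exact ⟨0, by norm_num, by simpa using h⟩
  · refine ⟨x / y, ?_, (mul_div_cancel₀ x hy.ne').symm⟩
    rw [Set.mem_Icc, ← abs_le, abs_div, abs_of_pos hy]
    exact div_le_one_of_le₀ h hy.le

/- By homogeneity, increments of signed powers reduce to the interval from some `t ∈ [-1, 1]`
to `1`; the exponent `1` is the increment `y - x` itself. -/
lemma exists_spow_sub_spow_eq {x y : ℝ} (hxy : x ≤ y) :
    ∃ t ∈ Set.Icc (-1 : ℝ) 1,
      ∀ k, spow y k - spow x k = spow (max |x| |y|) k * (1 - spow t k) := by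
  rcases le_total (-x) y with h | h
  · have hx : |x| ≤ y := abs_le.mpr ⟨by linarith, hxy⟩
    obtain ⟨t, ht, hxt⟩ := exists_eq_mul_of_abs_le hx
    have hmax : max |x| |y| = y := by
      rw [abs_of_nonneg ((abs_nonneg x).trans hx), max_eq_right hx]
    refine ⟨t, ht, fun k ↦ ?_⟩
    rw [hmax, hxt, mul_spow]
    ring
  · have hy : |-y| ≤ -x := abs_le.mpr ⟨by linarith, by linarith⟩
    obtain ⟨t, ht, hyt⟩ := exists_eq_mul_of_abs_le hy
    have hmax : max |x| |y| = -x := by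
      rw [← abs_neg x, ← abs_neg y, abs_of_nonneg ((abs_nonneg (-y)).trans hy), max_eq_left hy]
    refine ⟨t, ht, fun k ↦ ?_⟩
    have hyk : spow y k = -(spow (-x) k * spow t k) := by
      rw [← mul_spow, ← hyt, neg_spow, neg_neg]
    rw [hmax, hyk, neg_spow]
    ring

lemma exists_sub_eq_and_spow_sub_spow_eq {x y : ℝ} (hxy : x ≤ y) :
    ∃ t ∈ Set.Icc (-1 : ℝ) 1, y - x = max |x| |y| * (1 - t) ∧
      ∀ k, spow y k - spow x k = max |x| |y| ^ (k - 1) * (max |x| |y| * (1 - spow t k)) := by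
  obtain ⟨t, ht, h⟩ := exists_spow_sub_spow_eq hxy
  refine ⟨t, ht, by simpa only [spow_one] using h 1, fun k ↦ ?_⟩
  rw [h k, spow, abs_of_nonneg (le_max_of_le_left (abs_nonneg x)), mul_assoc]

lemma min_one_mul_le_spow_sub_spow {p x y : ℝ} (hp : 0 < p) (hxy : x ≤ y) :
    min 1 p / 2 * (max |x| |y| ^ (p - 1) * (y - x)) ≤ spow y p - spow x p := by
  obtain ⟨t, ht, hsub, hspow⟩ := exists_sub_eq_and_spow_sub_spow_eq hxy
  rw [hsub, hspow]
  calc min 1 p / 2 * (max |x| |y| ^ (p - 1) * (max |x| |y| * (1 - t)))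
      = max |x| |y| ^ (p - 1) * (max |x| |y| * (min 1 p / 2 * (1 - t))) := by ring
    _ ≤ max |x| |y| ^ (p - 1) * (max |x| |y| * (1 - spow t p)) := by
      gcongr
      exact min_one_mul_one_sub_le_one_sub_spow hp ht

lemma spow_sub_spow_le_max_one_mul {p x y : ℝ} (hp : 0 < p) (hxy : x ≤ y) :
    spow y p - spow x p ≤ 2 * max 1 p * (max |x| |y| ^ (p - 1) * (y - x)) := by
  obtain ⟨t, ht, hsub, hspow⟩ := exists_sub_eq_and_spow_sub_spow_eq hxy
  rw [hsub, hspow]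
  calc max |x| |y| ^ (p - 1) * (max |x| |y| * (1 - spow t p))
      ≤ max |x| |y| ^ (p - 1) * (max |x| |y| * (2 * max 1 p * (1 - t))) := by
        gcongr
        exact one_sub_spow_le_max_one_mul_one_sub hp ht
    _ = 2 * max 1 p * (max |x| |y| ^ (p - 1) * (max |x| |y| * (1 - t))) := by ring

lemma spow_le_spow {p x y : ℝ} (hp : 0 < p) (hxy : x ≤ y) : spow x p ≤ spow y p := by
  refine sub_nonneg.mp (le_trans ?_ (min_one_mul_le_spow_sub_spow hp hxy))
  exact mul_nonneg (by positivity) (mul_nonneg (by positivity) (sub_nonneg.mpr hxy))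

lemma rpow_le_rpow_abs_mul_rpow {K M N : ℝ} (hK : 1 ≤ K) (hM : 0 ≤ M) (hMN : M ≤ N)
    (hNK : N ≤ K * M) (s : ℝ) : N ^ s ≤ K ^ |s| * M ^ s := by
  rcases le_total 0 s with hs | hs
  · rw [abs_of_nonneg hs, ← Real.mul_rpow (zero_le_one.trans hK) hM]
    exact Real.rpow_le_rpow (hM.trans hMN) hNK hs
  · have hle : N ^ s ≤ M ^ s := by
      rcases hM.eq_or_lt with rfl | hM'
      · rw [le_antisymm (by simpa using hNK) hMN]
      · exact Real.rpow_le_rpow_of_nonpos hM' hMN hs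
    exact hle.trans (le_mul_of_one_le_left (by positivity) (Real.one_le_rpow hK (abs_nonneg s)))

lemma max_abs_le_max_abs_two_mul_sub (x y : ℝ) : max |x| |y| ≤ max |x| |2 * y - x| := by
  refine max_le (le_max_left _ _) ?_
  have htriangle : 2 * |y| ≤ |2 * y - x| + |x| := by
    simpa [abs_mul] using abs_add_le (2 * y - x) x
  linarith [le_max_left |x| |2 * y - x|, le_max_right |x| |2 * y - x|]

lemma max_abs_two_mul_sub_le (x y : ℝ) : max |x| |2 * y - x| ≤ 3 * max |x| |y| := by
  have hx := le_max_left |x| |y|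
  have hy := le_max_right |x| |y|
  refine max_le (by linarith [abs_nonneg x]) ?_
  have htriangle : |2 * y - x| ≤ 2 * |y| + |x| := by
    simpa [abs_mul] using abs_sub (2 * y) x
  linarith

lemma exists_spow_two_mul_sub_mul_sub_le {p : ℝ} (hp : 0 < p) :
    ∃ c : ℝ, 0 < c ∧ ∀ x y : ℝ, x ≤ y →
      (spow (2 * y - x) p - spow x p) * (y - x) ≤
        c * (spow y ((p + 1) / 2) - spow x ((p + 1) / 2)) ^ 2 := by
  set q := (p + 1) / 2 with hq
  have hq0 : 0 < q := by positivity
  refine ⟨4 * max 1 p * 3 ^ |p - 1| * (2 / min 1 q) ^ 2, by positivity, fun x y hxy ↦ ?_⟩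
  have hd : 0 ≤ y - x := sub_nonneg.mpr hxy
  have hupper := spow_sub_spow_le_max_one_mul hp (by linarith : x ≤ 2 * y - x)
  have hlower := min_one_mul_le_spow_sub_spow hq0 hxy
  have hdouble := rpow_le_rpow_abs_mul_rpow (by norm_num) (le_max_of_le_left (abs_nonneg x))
    (max_abs_le_max_abs_two_mul_sub x y) (max_abs_two_mul_sub_le x y) (p - 1)
  set M := max |x| |y|
  have hM : 0 ≤ M := le_max_of_le_left (abs_nonneg x)
  have hsq : M ^ (p - 1) = (M ^ (q - 1)) ^ 2 := by
    rw [← Real.rpow_mul_natCast hM, hq]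
    ring_nf
  calc (spow (2 * y - x) p - spow x p) * (y - x)
      ≤ 2 * max 1 p * (3 ^ |p - 1| * M ^ (p - 1) * (2 * y - x - x)) * (y - x) := by
        grw [hupper, hdouble]
        linarith
    _ = 4 * max 1 p * 3 ^ |p - 1| * (2 / min 1 q) ^ 2 *
          (min 1 q / 2 * (M ^ (q - 1) * (y - x))) ^ 2 := by
        rw [hsq]
        field_simp
        ring
    _ ≤ 4 * max 1 p * 3 ^ |p - 1| * (2 / min 1 q) ^ 2 * (spow y q - spow x q) ^ 2 := by gcongr

lemma bterm_nonneg {m : ℝ} (hm : 0 < m) (u a : ℝ) : 0 ≤ bterm m u a := by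
  have hconj : (1 + m).HolderConjugate ((1 + m) / m) := by
    rw [Real.holderConjugate_iff]
    exact ⟨by linarith, by field_simp⟩
  have hyoung := Real.young_inequality u (spow a m) hconj
  rw [abs_spow a hm.ne', ← Real.rpow_mul (abs_nonneg a), mul_div_cancel₀ _ hm.ne'] at hyoung
  have hbterm : bterm m u a =
      |u| ^ (1 + m) / (1 + m) + |a| ^ (1 + m) / ((1 + m) / m) - u * spow a m := by
    rw [bterm, mul_sub u, self_mul_spow u (by positivity)]
    field_simp
    ring
  rw [hbterm]
  exact sub_nonneg.mpr hyoung

lemma bterm_three_point (m u θ a : ℝ) :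
    bterm m u a = bterm m u θ + bterm m θ a + (u - θ) * (spow θ m - spow a m) := by
  unfold bterm
  ring

lemma sub_mul_le_half_bterm_add {m θ a v : ℝ} (hm : 0 < m) (hθ : spow θ m - spow a m = 2 * v)
    (u : ℝ) : (u - a) * v ≤ 1 / 2 * bterm m u a + (θ - a) * v := by
  have hthree := bterm_three_point m u θ a
  rw [hθ] at hthree
  linarith [bterm_nonneg hm u θ, bterm_nonneg hm θ a]

theorem obstacle_difference_absorption_general (m : ℝ) (hm : 0 < m) :
    ∃ c : ℝ, 0 < c ∧ ∀ u a ψ : ℝ, ψ ≤ u →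
      |u - a| * max (spow ψ m - spow a m) 0 ≤
        (1 / 2) * bterm m u a +
          c * |spow ψ ((1 + m) / 2) - spow a ((1 + m) / 2)| ^ 2 := by
  obtain ⟨c, hc, hremainder⟩ := exists_spow_two_mul_sub_mul_sub_le (inv_pos.mpr hm)
  refine ⟨c, hc, fun u a ψ hψu ↦ ?_⟩
  rcases le_total (spow ψ m) (spow a m) with h | h
  · rw [max_eq_right (sub_nonpos.mpr h), mul_zero]
    have := bterm_nonneg hm u a
    positivity
  have haψ : a ≤ ψ := by
    simpa only [spow_spow_inv hm.ne'] using spow_le_spow (inv_pos.mpr hm) h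
  have hexp : m * ((m⁻¹ + 1) / 2) = (1 + m) / 2 := by field_simp
  set θ := spow (2 * spow ψ m - spow a m) m⁻¹ with hθ
  have hθm : spow θ m - spow a m = 2 * (spow ψ m - spow a m) := by
    rw [hθ, spow_inv_spow hm.ne']
    ring
  have hθ_remainder := hremainder (spow a m) (spow ψ m) h
  rw [← hθ, spow_spow_inv hm.ne', ← spow_mul, ← spow_mul, hexp] at hθ_remainder
  rw [max_eq_left (sub_nonneg.mpr h), abs_of_nonneg (by linarith), sq_abs]
  exact (sub_mul_le_half_bterm_add hm hθm u).trans (by gcongr)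

/-- For `0 < m ≤ 1` there is `c = c(m) > 0` such that for all `u, a, ψ ∈ ℝ` with `ψ ≤ u`:
`|u − a| (ψ^m − a^m)_+ ≤ (1/2) 𝔟[u^m, a^m] + c |ψ^((1+m)/2) − a^((1+m)/2)|²`. -/
theorem obstacle_difference_absorption (m : ℝ) (hm0 : 0 < m) (hm1 : m ≤ 1) :
    ∃ c : ℝ, 0 < c ∧ ∀ u a ψ : ℝ, ψ ≤ u →
      |u - a| * max (spow ψ m - spow a m) 0 ≤
        (1 / 2) * bterm m u a +
          c * |spow ψ ((1 + m) / 2) - spow a ((1 + m) / 2)| ^ 2 :=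
  obstacle_difference_absorption_general m hm0
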